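/- arXiv:1009.6139 — 2 statements merged into one kernel-verified Lean document; each statement's English description precedes it below -/
import Mathlib

section
/- Let α ∈ F(13) satisfy −α⁴/12 − Tα³ + α² + 1 = 0 with |α| > 1, let v ∈ F₁₆₉ satisfy v² = 5, and set β(T) = v·α(vT). Then β ∈ F(13) (its coefficients lie in F₁₃), the first six partial quotients of β are (b₁, …, b₆) = (5T, 12T, 9T, 11T, T, 5T), and β¹³ = 12 P₄ β₇ + 9 Q₄, where β₇ is the seventh complete quotient of β, P₄ = (T² − 1)⁴ and Q₄ = ∫₀^T (x² − 1)³ dx. -/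
/-!
Since `12 = -1` in `F₁₃`, the equation for `α` reads `α⁴ - Tα³ + α² + 1 = 0`. It has only one
root of positive degree (`large_root_unique`), and `-α(-T)` is also such a root, so `α` has
only odd coefficients (`large_root_odd`). Hence the coefficients of `β = v α(vT)` only involve
even powers of `v`, that is, powers of `5`, and lie in `F₁₃`. Moreover `β` is a root of
`β⁴ - 5Tβ³ + 5β² - 1`, so the rest of the argument takes place over `F₁₃`, and the result is
transported to `F₁₆₉` by `IsCFOf.map`.

The expansion is found backwards (`main_expansion`): let `g = (β¹³ - 9Q₄) / (12P₄)`. Comparing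
degrees, `g` has positive degree, and therefore so do the successive series
`5T + 1/g`, `T + 1/(5T + 1/g)`, and so on. An identity modulo the quartic and modulo 13
(`quartic_identity`, `chain_eq`) shows `β = [5T, 12T, 9T, 11T, T, 5T, g]`, which makes `g` the
seventh complete quotient. Finally `g` has an infinite expansion of its own (`exists_cf`), because
it is irrational: otherwise `β` would be rational, and a rational root of the quartic is
constant (`not_rational`).
-/

noncomputable section
open Polynomial

def Tval (F : Type) [Field F] : LaurentSeries F :=
  (HahnSeries.single (1 : ℤ) (1 : F) : LaurentSeries F)⁻¹

def adeg {F : Type} [Field F] (α : LaurentSeries F) : ℤ := -α.order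

def pEval {F : Type} [Field F] (f : Polynomial F) : LaurentSeries F :=
  f.eval₂ HahnSeries.C (Tval F)

def pEvalHom (F : Type) [Field F] : Polynomial F →+* LaurentSeries F :=
  Polynomial.eval₂RingHom HahnSeries.C (Tval F)

/-- substitution `T ↦ v T` on Laurent series in `1/T`
(the underlying Hahn-series variable is `1/T`). -/
def scaleT {F : Type} [Field F] (v : F) (α : LaurentSeries F) : LaurentSeries F where
  coeff n := v ^ (-n) * α.coeff n
  isPWO_support' := α.isPWO_support'.mono (fun n hn => by
    simp only [Function.mem_support, ne_eq] at hn ⊢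
    intro h; exact hn (by rw [h, mul_zero]))

/-- coefficient-wise map of Laurent series along a ring homomorphism. -/
def lsMap {F L : Type} [Field F] [Field L] (f : F →+* L) (α : LaurentSeries F) :
    LaurentSeries L where
  coeff n := f (α.coeff n)
  isPWO_support' := α.isPWO_support'.mono (fun n hn => by
    simp only [Function.mem_support, ne_eq] at hn ⊢
    intro h; exact hn (by rw [h, map_zero]))

/-- integral (polynomial) part of a Laurent series in `1/T`. -/
def intPart {F : Type} [Field F] (α : LaurentSeries F) : Polynomial F :=
  ∑ j ∈ Finset.range ((-α.order).toNat + 1),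
    Polynomial.C (α.coeff (-(j : ℤ))) * Polynomial.X ^ j

def IsCFOf {F : Type} [Field F] (α : LaurentSeries F) (a : ℕ → Polynomial F)
    (β : ℕ → LaurentSeries F) : Prop :=
  β 1 = α ∧ ∀ n, 1 ≤ n →
    0 < (a n).degree ∧ 0 < adeg (β n) ∧ β n = pEval (a n) + (β (n + 1))⁻¹

def fcf {F : Type} [DivisionRing F] : List F → F
  | [] => 0
  | [c] => c
  | c :: d :: t => c + (fcf (d :: t))⁻¹

def fcfWD {F : Type} [DivisionRing F] : List F → Prop
  | [] => True
  | [_] => True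
  | _ :: d :: t => fcf (d :: t) ≠ 0 ∧ fcfWD (d :: t)

def polyInt {F : Type} [Field F] (f : Polynomial F) : Polynomial F :=
  ∑ i ∈ Finset.range (f.natDegree + 1),
    Polynomial.C (f.coeff i * ((i : F) + 1)⁻¹) * Polynomial.X ^ (i + 1)

def Pka {F : Type} [Field F] (k : ℕ) (a : F) : Polynomial F :=
  (Polynomial.X ^ 2 + Polynomial.C a) ^ k

def Qka {F : Type} [Field F] (k : ℕ) (a : F) : Polynomial F := polyInt (Pka (k - 1) a)

def Pk {F : Type} [Field F] (k : ℕ) : Polynomial F := (Polynomial.X ^ 2 - 1) ^ k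

def Qk {F : Type} [Field F] (k : ℕ) : Polynomial F := polyInt (Pk (k - 1))

def Aseq (F : Type) [Field F] (p k : ℕ) : ℕ → Polynomial F
  | 0 => Polynomial.X
  | i + 1 => Aseq F p k i ^ p / Pk k

def vseq (F : Type) [Field F] (k : ℕ) : ℕ → F
  | 0 => 1
  | 1 => 2 * k - 1
  | i + 1 =>
      (((2 * (k : ℤ) - 2 * i - 1) * (2 * (k : ℤ) - 2 * i + 1) : ℤ) : F) *
        (((i : F) * (2 * k - i))⁻¹) * (vseq F k i)⁻¹

def theta (F : Type) [Field F] (k : ℕ) : F :=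
  (-1) ^ k * ∏ j ∈ Finset.Icc 1 k, (1 - (2 * (j : F))⁻¹)

def continuant {R : Type} [CommRing R] (a : ℕ → R) (c0 c1 : R) : ℕ → R
  | 0 => c0
  | 1 => c1
  | n + 2 => a (n + 2) * continuant a c0 c1 (n + 1) + continuant a c0 c1 n

def largestPow (m N : ℕ) : ℕ := sSup {j : ℕ | m ^ j ∣ N}

def nu0 {F : Type} [Field F] (a : ℕ → Polynomial F) : ℝ :=
  Filter.limsup
    (fun n => ((a (n + 1)).natDegree : ℝ) / ∑ j ∈ Finset.Icc 1 n, ((a j).natDegree : ℝ))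
    Filter.atTop

instance : Fact (Nat.Prime 13) := ⟨by norm_num⟩

/-! ### The algebraic identity behind the expansion -/

/-- The relation `B (y₆ g + y₅) = x₆ g + x₅`, where `x₅/y₅` and `x₆/y₆` are the last two
convergents of `[5T, 12T, 9T, 11T, T, 5T]` with integer coefficients left unreduced. After
multiplication by `12 (T² - 1)⁴` it is a multiple of the quartic modulo 13; the two long factors
are the cofactors of the quartic and of 13. -/
theorem quartic_identity {L : Type} [Field L] (h13 : (13 : L) = 0) (T B g : L)
    (hB : B ^ 4 - 5 * T * B ^ 3 + 5 * B ^ 2 - 1 = 0) (hP : (12 : L) * (T ^ 2 - 1) ^ 4 ≠ 0)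
    (hg : 12 * (T ^ 2 - 1) ^ 4 * g = B ^ 13 - 9 * (2 * T ^ 7 + 2 * T ^ 5 + T ^ 3 - T)) :
    B * ((5940 * T ^ 5 + 1843 * T ^ 3 + 28 * T) * g + (1188 * T ^ 4 + 131 * T ^ 2 + 1))
      = (29700 * T ^ 6 + 9710 * T ^ 4 + 289 * T ^ 2 + 1) * g
        + (5940 * T ^ 5 + 754 * T ^ 3 + 15 * T) := by
  apply mul_left_cancel₀ hP
  linear_combination (B * (5940 * T ^ 5 + 1843 * T ^ 3 + 28 * T)
      - (29700 * T ^ 6 + 9710 * T ^ 4 + 289 * T ^ 2 + 1)) * hg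
    + ((-T ^ 5 - 3 * T ^ 3 + 2 * T) * B ^ 10 + (-T ^ 4 - 6 * T ^ 2 - 1) * B ^ 9
      + (-2 * T ^ 3 - 2 * T) * B ^ 8 + (-5 * T ^ 4 - 6 * T ^ 2 + 5) * B ^ 7
      + (3 * T ^ 3 - 2 * T) * B ^ 6 + T ^ 2 * B ^ 5 + (T ^ 3 - 5 * T) * B ^ 4
      + (3 * T ^ 2 + 5) * B ^ 3 - 4 * T * B ^ 2 + (5 * T ^ 2 + 1) * B - 6 * T) * hB
    + ((457 * T ^ 5 + 142 * T ^ 3 + 2 * T) * B ^ 14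
      + (-2285 * T ^ 6 - 748 * T ^ 4 - 21 * T ^ 2) * B ^ 13 + (-T ^ 3 - T) * B ^ 12
      + 2 * T ^ 2 * B ^ 11 + (-2 * T ^ 5 - 2 * T ^ 3 + 3 * T) * B ^ 10
      + (3 * T ^ 4 + T ^ 2 - 2) * B ^ 9 + (-T ^ 3 + T) * B ^ 8 - 3 * T ^ 2 * B ^ 7
      + (T ^ 3 + 4 * T) * B ^ 6 + (-3 * T ^ 2 - 2) * B ^ 5 + (2 * T ^ 3 + 2 * T) * B ^ 4
      - 4 * T ^ 2 * B ^ 3 + 2 * T * B ^ 2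
      + (-7128 * T ^ 12 - 15042 * T ^ 10 - 606 * T ^ 8 - 867 * T ^ 6 + 1875 * T ^ 4
        + 137 * T ^ 2 + 1) * B
      + (35640 * T ^ 13 + 75804 * T ^ 11 + 4278 * T ^ 9 + 4374 * T ^ 7 - 9303 * T ^ 5
        - 840 * T ^ 3 - 15 * T)) * h13

/-- If `g` is the candidate for the seventh complete quotient, then
`B = [5T, 12T, 9T, 11T, T, 5T, g]`. -/
theorem chain_eq {L : Type} [Field L] (h13 : (13 : L) = 0)
    {T B g g6 g5 g4 g3 g2 : L}
    (hB : B ^ 4 - 5 * T * B ^ 3 + 5 * B ^ 2 - 1 = 0) (hP : (12 : L) * (T ^ 2 - 1) ^ 4 ≠ 0)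
    (hg : 12 * (T ^ 2 - 1) ^ 4 * g = B ^ 13 - 9 * (2 * T ^ 7 + 2 * T ^ 5 + T ^ 3 - T))
    (n7 : g ≠ 0) (n6 : g6 ≠ 0) (n5 : g5 ≠ 0) (n4 : g4 ≠ 0) (n3 : g3 ≠ 0) (n2 : g2 ≠ 0)
    (h6 : g6 = 5 * T + g⁻¹) (h5 : g5 = T + g6⁻¹) (h4 : g4 = 11 * T + g5⁻¹)
    (h3 : g3 = 9 * T + g4⁻¹) (h2 : g2 = 12 * T + g3⁻¹) :
    B = 5 * T + g2⁻¹ := by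
  -- Clearing denominators one quotient at a time produces the continuants.
  have e6 : g6 * g = 5 * T * g + 1 := by rw [h6]; field_simp
  have e5 : g5 * (g6 * g) = T * (g6 * g) + g := by rw [h5]; field_simp
  have e4 : g4 * (g5 * (g6 * g)) = 11 * T * (g5 * (g6 * g)) + g6 * g := by rw [h4]; field_simp
  have e3 : g3 * (g4 * (g5 * (g6 * g))) = 9 * T * (g4 * (g5 * (g6 * g))) + g5 * (g6 * g) := by
    rw [h3]; field_simp
  have e2 : g2 * (g3 * (g4 * (g5 * (g6 * g))))
      = 12 * T * (g3 * (g4 * (g5 * (g6 * g)))) + g4 * (g5 * (g6 * g)) := by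
    rw [h2]; field_simp
  have hY : g2 * (g3 * (g4 * (g5 * (g6 * g)))) ≠ 0 := by positivity
  have key := quartic_identity h13 T B g hB hP hg
  rw [e6] at e5 e4 e3 e2 hY
  rw [e5] at e4 e3 e2 hY
  rw [e4] at e3 e2 hY
  rw [e3] at e2 hY
  apply mul_right_cancel₀ hY
  rw [add_mul, inv_mul_cancel_left₀ n2, e2]
  linear_combination key

/-! ### Degrees, integral parts and continued fractions in Laurent series -/

section Laurent

variable {F : Type} [Field F]

theorem Tval_eq : Tval F = HahnSeries.single (-1 : ℤ) (1 : F) := by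
  simp [Tval, HahnSeries.inv_single]

theorem pEval_eq (f : Polynomial F) : pEval f = pEvalHom F f := rfl

theorem pEval_monomial (k : ℕ) (c : F) :
    pEval (Polynomial.monomial k c) = HahnSeries.single (-(k : ℤ)) c := by
  rw [pEval, Polynomial.eval₂_monomial, Tval_eq, HahnSeries.single_pow]
  simp [HahnSeries.C_apply, HahnSeries.single_mul_single]

theorem coeff_pEval (f : Polynomial F) (n : ℤ) :
    (pEval f).coeff n = if n ≤ 0 then f.coeff (-n).toNat else 0 := by
  induction f using Polynomial.induction_on' with
  | add p q hp hq =>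
    rw [pEval_eq, map_add, HahnSeries.coeff_add, ← pEval_eq, ← pEval_eq, hp, hq]
    split_ifs <;> simp
  | monomial k c =>
    rw [pEval_monomial, HahnSeries.coeff_single, Polynomial.coeff_monomial]
    split_ifs <;> first | rfl | (exfalso; omega)

theorem pEval_injective : Function.Injective (pEval (F := F)) := by
  intro p q h
  ext n
  have := congrArg (fun x => HahnSeries.coeff x (-(n : ℤ))) h
  simpa [coeff_pEval] using this

theorem adeg_pos_of_coeff {x : LaurentSeries F} {n : ℤ} (hn : n < 0) (h : x.coeff n ≠ 0) :
    0 < adeg x := by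
  have := HahnSeries.order_le_of_coeff_ne_zero h
  unfold adeg; omega

theorem ne_zero_of_adeg_pos {x : LaurentSeries F} (h : 0 < adeg x) : x ≠ 0 := by
  rintro rfl; simp [adeg] at h

theorem adeg_inv (x : LaurentSeries F) : adeg x⁻¹ = -adeg x := by
  by_cases hx : x = 0
  · simp [hx, adeg]
  have := HahnSeries.order_mul hx (inv_ne_zero hx)
  rw [mul_inv_cancel₀ hx, HahnSeries.order_one] at this
  unfold adeg; omega

theorem orderTop_inv_pos {x : LaurentSeries F} (h : 0 < adeg x) : 0 < x⁻¹.orderTop := by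
  have h1 := adeg_inv x
  have hx := inv_ne_zero (ne_zero_of_adeg_pos h)
  rw [← HahnSeries.order_eq_orderTop_of_ne_zero hx]
  have : 0 < x⁻¹.order := by unfold adeg at *; omega
  exact_mod_cast this

theorem adeg_inv_pos {x : LaurentSeries F} (hx : x ≠ 0) (h : 0 < x.orderTop) :
    0 < adeg x⁻¹ := by
  rw [← HahnSeries.order_eq_orderTop_of_ne_zero hx] at h
  have h1 : 0 < x.order := by exact_mod_cast h
  rw [adeg_inv]; unfold adeg; omega

theorem orderTop_mul_pos {x y : LaurentSeries F} (hx : 0 < x.orderTop) (hy : 0 < y.orderTop) :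
    0 < (x * y).orderTop :=
  (add_pos_of_pos_of_nonneg hx hy.le).trans_le HahnSeries.orderTop_add_le_mul

theorem orderTop_add_pos {x y : LaurentSeries F} (hx : 0 < x.orderTop) (hy : 0 < y.orderTop) :
    0 < (x + y).orderTop :=
  (lt_min hx hy).trans_le HahnSeries.min_orderTop_le_orderTop_add

theorem le_orderTop_pEval (f : Polynomial F) :
    ((-(f.natDegree : ℤ) : ℤ) : WithTop ℤ) ≤ (pEval f).orderTop := by
  rw [HahnSeries.le_orderTop_iff_forall]
  intro j hj
  have hj' : j < -(f.natDegree : ℤ) := by exact_mod_cast hj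
  rw [coeff_pEval, if_pos (by omega), Polynomial.coeff_eq_zero_of_natDegree_lt (by omega)]

theorem adeg_linear_pos {c : F} (hc : c ≠ 0) {g : LaurentSeries F} (hg : 0 < adeg g) :
    0 < adeg (pEval (Polynomial.C c * Polynomial.X) + g⁻¹) := by
  apply adeg_pos_of_coeff (n := -1) (by norm_num)
  rw [HahnSeries.coeff_add, coeff_pEval,
    HahnSeries.coeff_eq_zero_of_lt_orderTop (x := g⁻¹) (lt_trans (by norm_cast) (orderTop_inv_pos hg))]
  simpa using hc

theorem orderTop_sub_intPart (γ : LaurentSeries F) : 0 < (γ - pEval (intPart γ)).orderTop := by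
  have h1 : ((1 : ℤ) : WithTop ℤ) ≤ (γ - pEval (intPart γ)).orderTop := by
    rw [HahnSeries.le_orderTop_iff_forall]
    intro j hj
    have hj' : j < 1 := by exact_mod_cast hj
    rw [HahnSeries.coeff_sub, coeff_pEval, if_pos (by omega), intPart, Polynomial.finsetSum_coeff]
    simp only [Polynomial.coeff_C_mul_X_pow]
    rw [Finset.sum_ite_eq]
    split_ifs with h
    · rw [Int.toNat_of_nonneg (by omega)]; simp
    · rw [HahnSeries.coeff_eq_zero_of_lt_order, sub_zero]
      simp at h; omega
  exact lt_of_lt_of_le (by norm_cast) h1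

theorem degree_intPart_pos {γ : LaurentSeries F} (h : 0 < adeg γ) : 0 < (intPart γ).degree := by
  by_contra! hd
  have hγ := ne_zero_of_adeg_pos h
  have ho : γ.order < 0 := by unfold adeg at h; omega
  have h1 : (γ - pEval (intPart γ)).coeff γ.order = 0 :=
    HahnSeries.coeff_eq_zero_of_lt_orderTop
      (lt_trans (by exact_mod_cast ho) (orderTop_sub_intPart γ))
  rw [HahnSeries.coeff_sub, coeff_pEval, if_pos ho.le, Polynomial.coeff_eq_zero_of_degree_lt,
    sub_zero, HahnSeries.coeff_order_eq_zero] at h1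
  · exact hγ h1
  · refine hd.trans_lt ?_
    norm_cast; omega

/-- The field of rational functions `F(T)`, as a subfield of the Laurent series in `1/T`. -/
def ratSub (F : Type) [Field F] : Subfield (LaurentSeries F) :=
  Subfield.closure (Set.range (pEvalHom F))

theorem pEval_mem_ratSub (f : Polynomial F) : pEval f ∈ ratSub F :=
  Subfield.subset_closure ⟨f, rfl⟩

/-- An irrational series of positive degree has an infinite continued fraction expansion: by
irrationality the algorithm never stops. -/
theorem exists_cf (γ : LaurentSeries F) (hγ : γ ∉ ratSub F) (hd : 0 < adeg γ) :
    ∃ a β, IsCFOf γ a β := by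
  have step : ∀ x : {x : LaurentSeries F // x ∉ ratSub F ∧ 0 < adeg x},
      (x.1 - pEval (intPart x.1))⁻¹ ∉ ratSub F ∧ 0 < adeg (x.1 - pEval (intPart x.1))⁻¹ := by
    rintro ⟨x, hx, hxd⟩
    have h1 : x - pEval (intPart x) ∉ ratSub F := fun h => hx (by
      simpa using add_mem h (pEval_mem_ratSub (intPart x)))
    refine ⟨fun h => h1 (by simpa using inv_mem h), adeg_inv_pos ?_ (orderTop_sub_intPart x)⟩
    intro h0; exact h1 (h0 ▸ zero_mem _)
  let s : ℕ → {x : LaurentSeries F // x ∉ ratSub F ∧ 0 < adeg x} :=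
    fun n => Nat.rec ⟨γ, hγ, hd⟩ (fun _ x => ⟨_, step x⟩) n
  refine ⟨fun n => intPart (s (n - 1)).1, fun n => (s (n - 1)).1, rfl, fun n hn => ?_⟩
  obtain ⟨m, rfl⟩ := Nat.exists_eq_add_of_le' hn
  refine ⟨degree_intPart_pos (s m).2.2, (s m).2.2, ?_⟩
  change (s m).1 = pEval (intPart (s m).1) + ((s m).1 - pEval (intPart (s m).1))⁻¹⁻¹
  rw [inv_inv]; ring

/-- Prepending a linear partial quotient `cT` to an expansion; indices start at 1, so the values
at 0 play no role. -/
theorem IsCFOf.cons {γ : LaurentSeries F} {a : ℕ → Polynomial F} {β : ℕ → LaurentSeries F}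
    (h : IsCFOf γ a β) {c : F} (hc : c ≠ 0) :
    IsCFOf (pEval (Polynomial.C c * Polynomial.X) + γ⁻¹)
      (fun n => if n ≤ 1 then Polynomial.C c * Polynomial.X else a (n - 1))
      (fun n => if n ≤ 1 then pEval (Polynomial.C c * Polynomial.X) + γ⁻¹ else β (n - 1)) := by
  refine ⟨by simp, fun n hn => ?_⟩
  rcases Nat.lt_or_ge 1 n with h1 | h1
  · have := h.2 (n - 1) (by omega)
    rw [Nat.sub_add_cancel hn] at this
    simpa [show ¬ n ≤ 1 by omega, show n ≠ 0 by omega] using this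
  · obtain rfl : n = 1 := by omega
    refine ⟨?_, ?_, ?_⟩
    · simp [Polynomial.degree_C_mul_X hc]
    · simpa using adeg_linear_pos hc (h.1 ▸ (h.2 1 le_rfl).2.1)
    · simp [h.1]

end Laurent

/-! ### Coefficient maps and the substitution `T ↦ vT` -/

section Homs

variable {F L : Type} [Field F] [Field L]

/-- `lsMap` as a ring homomorphism. -/
def lsHom (f : F →+* L) : LaurentSeries F →+* LaurentSeries L where
  toFun := lsMap f
  map_one' := HahnSeries.map_one f.toMonoidWithZeroHom
  map_zero' := by ext n; simp [lsMap]
  map_mul' x y := HahnSeries.map_mul (f : F →ₙ+* L)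
  map_add' x y := by ext n; simp [lsMap]

theorem lsHom_coeff (f : F →+* L) (x : LaurentSeries F) (n : ℤ) :
    (lsHom f x).coeff n = f (x.coeff n) := rfl

theorem lsHom_apply (f : F →+* L) (x : LaurentSeries F) : lsMap f x = lsHom f x := rfl

theorem lsHom_pEval (f : F →+* L) (p : Polynomial F) : lsHom f (pEval p) = pEval (p.map f) := by
  ext n
  rw [lsHom_coeff, coeff_pEval, coeff_pEval, Polynomial.coeff_map]
  split_ifs <;> simp

theorem pEval_X : pEval (Polynomial.X : Polynomial F) = Tval F := by simp [pEval]

theorem lsHom_Tval (f : F →+* L) : lsHom f (Tval F) = Tval L := by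
  rw [← pEval_X, lsHom_pEval, Polynomial.map_X, pEval_X]

theorem adeg_lsHom (f : F →+* L) (x : LaurentSeries F) : adeg (lsHom f x) = adeg x := by
  by_cases hx : x = 0
  · simp [hx, adeg]
  have hx' : lsHom f x ≠ 0 := (_root_.map_ne_zero _).2 hx
  unfold adeg
  congr 1
  apply le_antisymm
  · apply HahnSeries.order_le_of_coeff_ne_zero
    rw [lsHom_coeff, _root_.map_ne_zero]
    exact HahnSeries.coeff_order_eq_zero.not.2 hx
  · apply HahnSeries.order_le_of_coeff_ne_zero
    have := HahnSeries.coeff_order_eq_zero.not.2 hx'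
    rwa [lsHom_coeff, map_eq_zero] at this

theorem IsCFOf.map (f : F →+* L) {γ : LaurentSeries F} {a : ℕ → Polynomial F}
    {β : ℕ → LaurentSeries F} (h : IsCFOf γ a β) :
    IsCFOf (lsHom f γ) (fun n => (a n).map f) (fun n => lsHom f (β n)) := by
  refine ⟨congrArg (lsHom f) h.1, fun n hn => ?_⟩
  obtain ⟨h1, h2, h3⟩ := h.2 n hn
  refine ⟨by rwa [Polynomial.degree_map], by rwa [adeg_lsHom], ?_⟩
  rw [← lsHom_pEval, ← map_inv₀, ← map_add, ← h3]

theorem scaleT_coeff (v : F) (x : LaurentSeries F) (n : ℤ) :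
    (scaleT v x).coeff n = v ^ (-n) * x.coeff n := rfl

/-- `scaleT` as a ring homomorphism, for `v ≠ 0`. -/
def scaleHom (v : F) (hv : v ≠ 0) : LaurentSeries F →+* LaurentSeries F where
  toFun := scaleT v
  map_one' := by
    ext n
    rw [scaleT_coeff, HahnSeries.coeff_one]
    split_ifs with h <;> simp [h]
  map_zero' := by ext n; simp [scaleT]
  map_mul' x y := by
    have hs : ∀ z : LaurentSeries F, (scaleT v z).support = z.support := by
      intro z; ext n; simp [scaleT_coeff, zpow_ne_zero, hv]
    ext n
    rw [scaleT_coeff, HahnSeries.coeff_mul, HahnSeries.coeff_mul, Finset.mul_sum]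
    refine Finset.sum_congr ?_ ?_
    · ext ij; simp only [Finset.mem_antidiagonal, hs]
    · intro ij hij
      rw [Finset.mem_antidiagonal] at hij
      rw [scaleT_coeff, scaleT_coeff, ← hij.2.2, neg_add, zpow_add₀ hv]
      ring
  map_add' x y := by ext n; simp [scaleT, mul_add]

theorem scaleHom_apply (v : F) (hv : v ≠ 0) (x : LaurentSeries F) :
    scaleT v x = scaleHom v hv x := rfl

theorem scaleHom_coeff (v : F) (hv : v ≠ 0) (x : LaurentSeries F) (n : ℤ) :
    (scaleHom v hv x).coeff n = v ^ (-n) * x.coeff n := rfl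

theorem scaleHom_Tval (v : F) (hv : v ≠ 0) :
    scaleHom v hv (Tval F) = HahnSeries.C v * Tval F := by
  ext n
  rw [scaleHom_coeff, HahnSeries.C_apply, HahnSeries.coeff_single_zero_mul, Tval_eq,
    HahnSeries.coeff_single]
  split_ifs with h <;> simp [h]

theorem adeg_scaleHom (v : F) (hv : v ≠ 0) (x : LaurentSeries F) :
    adeg (scaleHom v hv x) = adeg x := by
  by_cases hx : x = 0
  · simp [hx, adeg]
  have hx' : scaleHom v hv x ≠ 0 := (_root_.map_ne_zero _).2 hx
  unfold adeg
  congr 1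
  apply le_antisymm
  · apply HahnSeries.order_le_of_coeff_ne_zero
    rw [scaleHom_coeff]
    exact mul_ne_zero (zpow_ne_zero _ hv) (HahnSeries.coeff_order_eq_zero.not.2 hx)
  · apply HahnSeries.order_le_of_coeff_ne_zero
    have := HahnSeries.coeff_order_eq_zero.not.2 hx'
    rw [scaleHom_coeff] at this
    exact right_ne_zero_of_mul this

theorem adeg_C_mul {c : F} (hc : c ≠ 0) (x : LaurentSeries F) :
    adeg (HahnSeries.C c * x) = adeg x := by
  by_cases hx : x = 0
  · simp [hx]
  unfold adeg
  rw [HahnSeries.order_mul (HahnSeries.C_ne_zero hc) hx, HahnSeries.order_C, zero_add]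

end Homs

/-! ### The large root of `α⁴ - Tα³ + α² + 1` -/

/-- Reciprocals `x ≠ y` of two large roots satisfy `1 = xy + x³y + x²y² + xy³`, whose right side
has positive order. The coefficient `T` is arbitrary, since it is eliminated. -/
theorem large_root_unique {F : Type} [Field F] {T α γ : LaurentSeries F}
    (hα : α ^ 4 - T * α ^ 3 + α ^ 2 + 1 = 0) (hγ : γ ^ 4 - T * γ ^ 3 + γ ^ 2 + 1 = 0)
    (dα : 0 < adeg α) (dγ : 0 < adeg γ) : α = γ := by
  have nα := ne_zero_of_adeg_pos dα
  have nγ := ne_zero_of_adeg_pos dγ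
  have sx := orderTop_inv_pos dα
  have sy := orderTop_inv_pos dγ
  apply inv_injective
  have hx : 1 - T * α⁻¹ + α⁻¹ ^ 2 + α⁻¹ ^ 4 = 0 := by
    field_simp; linear_combination hα
  have hy : 1 - T * γ⁻¹ + γ⁻¹ ^ 2 + γ⁻¹ ^ 4 = 0 := by
    field_simp; linear_combination hγ
  generalize α⁻¹ = x at *
  generalize γ⁻¹ = y at *
  by_contra hne
  have h1 : x * y + x * y * (x * x) + x * y * (x * y) + x * y * (y * y) = 1 := by
    apply mul_left_cancel₀ (sub_ne_zero.2 hne)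
    linear_combination y * hx - x * hy
  have sxy := orderTop_mul_pos sx sy
  have h2 := orderTop_add_pos (orderTop_add_pos (orderTop_add_pos sxy
    (orderTop_mul_pos sxy (orderTop_mul_pos sx sx))) (orderTop_mul_pos sxy sxy))
    (orderTop_mul_pos sxy (orderTop_mul_pos sy sy))
  rw [h1, HahnSeries.orderTop_one] at h2
  exact lt_irrefl _ h2

/-- The root is an odd function of `T`: by uniqueness it equals `-α(-T)`, which solves the same
equation. -/
theorem large_root_odd {F : Type} [Field F] (h2 : (2 : F) ≠ 0) {α : LaurentSeries F}
    (hα : α ^ 4 - Tval F * α ^ 3 + α ^ 2 + 1 = 0) (dα : 0 < adeg α) {n : ℤ} (hn : Even n) :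
    α.coeff n = 0 := by
  have h0 : (-1 : F) ≠ 0 := by simp
  have hs := congrArg (scaleHom (-1) h0) hα
  simp only [map_add, map_sub, map_mul, map_pow, map_one, map_zero, scaleHom_Tval, map_neg] at hs
  have h1 : α = -scaleHom (-1) h0 α := by
    refine large_root_unique (T := Tval F) hα ?_ dα ?_
    · linear_combination hs
    · rw [← adeg_scaleHom (-1) h0 α] at dα
      unfold adeg at *; rwa [HahnSeries.order_neg]
  have h3 := congrArg (fun x => HahnSeries.coeff x n) h1
  simp only [HahnSeries.coeff_neg, scaleHom_coeff, hn.neg.neg_one_zpow, one_mul] at h3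
  have h4 : 2 * α.coeff n = 0 := by linear_combination h3
  simpa [h2] using h4

theorem thirteen_eq_zero {F : Type} [Field F] (h : (13 : F) = 0) : (13 : LaurentSeries F) = 0 := by
  rw [← map_ofNat (HahnSeries.C (Γ := ℤ) (R := F)) 13, h, map_zero]

/-! ### The quartic satisfied by `β` -/

/-- In lowest terms `B = p/q`, the quartic forces `q ∣ p⁴` and `p ∣ q⁴`, so `B` would be a
constant. -/
theorem not_rational {F : Type} [Field F] {B : LaurentSeries F}
    (hB : B ^ 4 - 5 * Tval F * B ^ 3 + 5 * B ^ 2 - 1 = 0) (dB : 0 < adeg B) : B ∉ ratSub F := by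
  intro h
  rw [ratSub, ← RingHom.coe_range, Subfield.mem_closure_iff, Subring.closure_eq] at h
  obtain ⟨_, ⟨p, rfl⟩, _, ⟨q, rfl⟩, h⟩ := h
  have hq : q ≠ 0 := by
    rintro rfl
    rw [map_zero, div_zero] at h
    exact ne_zero_of_adeg_pos dB h.symm
  have inj : Function.Injective (pEvalHom F) := pEval_injective
  have hq' : pEvalHom F q ≠ 0 := (map_ne_zero_iff _ inj).2 hq
  -- Reduce to a fraction in lowest terms.
  obtain ⟨d, p', q', hd, hcop, rfl, rfl⟩ : ∃ d p' q' : Polynomial F, d ≠ 0 ∧ IsCoprime p' q' ∧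
      p = p' * d ∧ q = q' * d := by
    classical
    let _ := IsBezout.toGCDDomain (Polynomial F)
    obtain ⟨p', q', hp', hq', hu⟩ := extract_gcd p q
    exact ⟨gcd p q, p', q', left_ne_zero_of_mul (hq' ▸ hq), (gcd_isUnit_iff p' q').1 hu,
      by rw [mul_comm]; exact hp', by rw [mul_comm]; exact hq'⟩
  have hd' : pEvalHom F d ≠ 0 := (map_ne_zero_iff _ inj).2 hd
  have hq1 : q' ≠ 0 := left_ne_zero_of_mul hq
  have hq2 : pEvalHom F q' ≠ 0 := (map_ne_zero_iff _ inj).2 hq1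
  rw [map_mul, map_mul, mul_div_mul_right _ _ hd'] at h
  have hpoly : p' ^ 4 - 5 * Polynomial.X * p' ^ 3 * q' + 5 * p' ^ 2 * q' ^ 2 - q' ^ 4 = 0 := by
    apply inj
    have hX : pEvalHom F Polynomial.X = Tval F := pEval_X
    simp only [map_add, map_sub, map_mul, map_pow, map_zero, map_ofNat, hX]
    rw [← h] at hB
    field_simp at hB
    linear_combination hB
  have up : IsUnit p' := by
    refine (hcop.pow_right (n := 4)).isUnit_of_dvd' dvd_rfl
      ⟨p' ^ 3 - 5 * Polynomial.X * p' ^ 2 * q' + 5 * p' * q' ^ 2, ?_⟩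
    linear_combination -hpoly
  have uq : IsUnit q' := by
    refine (hcop.pow_left (m := 4)).isUnit_of_dvd'
      ⟨5 * Polynomial.X * p' ^ 3 - 5 * p' ^ 2 * q' + q' ^ 3, ?_⟩ dvd_rfl
    linear_combination hpoly
  obtain ⟨a, ha, rfl⟩ := Polynomial.isUnit_iff.1 up
  obtain ⟨b, hb, rfl⟩ := Polynomial.isUnit_iff.1 uq
  have hC : ∀ c : F, pEvalHom F (Polynomial.C c) = HahnSeries.C c := by
    intro c; simp [pEvalHom]
  rw [hC, hC, ← map_div₀] at h
  rw [← h] at dB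
  rw [adeg, HahnSeries.order_C] at dB
  exact absurd dB (by norm_num)

theorem Qk_four : (Qk 4 : Polynomial (ZMod 13))
    = 2 * Polynomial.X ^ 7 + 2 * Polynomial.X ^ 5 + Polynomial.X ^ 3 - Polynomial.X := by
  have h1 : (Pk (4 - 1) : Polynomial (ZMod 13)) = Polynomial.X ^ 6 - 3 * Polynomial.X ^ 4
      + 3 * Polynomial.X ^ 2 - 1 := by
    simp only [Pk]; ring
  have h2 : (Pk (4 - 1) : Polynomial (ZMod 13)).natDegree = 6 := by
    rw [h1]; compute_degree!
  have c3 : (2 + 1 : ZMod 13)⁻¹ = 9 := inv_eq_of_mul_eq_one_right (by decide)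
  have c5 : (4 + 1 : ZMod 13)⁻¹ = 8 := inv_eq_of_mul_eq_one_right (by decide)
  have c7 : (6 + 1 : ZMod 13)⁻¹ = 2 := inv_eq_of_mul_eq_one_right (by decide)
  rw [Qk, polyInt, h2, h1]
  simp [Finset.sum_range_succ, Polynomial.coeff_one, Polynomial.coeff_X_pow, c3, c5, c7]
  have h13 : (13 : Polynomial (ZMod 13)) = 0 := by
    rw [← map_ofNat (Polynomial.C (R := ZMod 13)) 13,
      show (OfNat.ofNat 13 : ZMod 13) = 0 by decide, map_zero]
  simp only [map_ofNat]
  linear_combination (2 * Polynomial.X ^ 3 - 2 * Polynomial.X ^ 5) * h13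

/-- The expansion over `F₁₃`. The seventh complete quotient `g` is defined by the equation
`B¹³ = 12 P₄ g + 9 Q₄`, and `chain_eq` shows that prepending the six linear partial quotients
to it gives back `B`. -/
theorem main_expansion {B : LaurentSeries (ZMod 13)}
    (hB : B ^ 4 - 5 * Tval (ZMod 13) * B ^ 3 + 5 * B ^ 2 - 1 = 0) (dB : 0 < adeg B) :
    ∃ b βc, IsCFOf B b βc ∧
      b 1 = Polynomial.C 5 * Polynomial.X ∧
      b 2 = Polynomial.C 12 * Polynomial.X ∧
      b 3 = Polynomial.C 9 * Polynomial.X ∧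
      b 4 = Polynomial.C 11 * Polynomial.X ∧
      b 5 = Polynomial.X ∧
      b 6 = Polynomial.C 5 * Polynomial.X ∧
      B ^ 13 = 12 * pEval (Pk 4) * βc 7 + 9 * pEval (Qk 4) := by
  have h13 : (13 : LaurentSeries (ZMod 13)) = 0 := thirteen_eq_zero (by decide)
  have h12 : (12 : LaurentSeries (ZMod 13)) ≠ 0 := by
    intro h
    exact one_ne_zero (by linear_combination h13 - h : (1 : LaurentSeries (ZMod 13)) = 0)
  have hPne : (12 : LaurentSeries (ZMod 13)) * pEval (Pk 4) ≠ 0 := by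
    apply mul_ne_zero h12
    rw [pEval_eq, map_ne_zero_iff _ pEval_injective]
    exact pow_ne_zero _ (Polynomial.X_pow_sub_C_ne_zero (by norm_num) 1)
  obtain ⟨g, hg⟩ : ∃ g, g = (B ^ 13 - 9 * pEval (Qk 4)) / (12 * pEval (Pk 4)) := ⟨_, rfl⟩
  have hg' : 12 * pEval (Pk 4) * g = B ^ 13 - 9 * pEval (Qk 4) := by
    rw [hg, mul_div_cancel₀ _ hPne]
  -- `B ^ 13` has degree at least 13, while `Q₄` has degree 7 and `P₄` has degree 8.
  have dg : 0 < adeg g := by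
    by_contra! hneg
    have hg0 : (0 : WithTop ℤ) ≤ g.orderTop := by
      by_cases h0 : g = 0
      · simp [h0]
      · rw [← HahnSeries.order_eq_orderTop_of_ne_zero h0]
        have : 0 ≤ g.order := by unfold adeg at hneg; omega
        exact_mod_cast this
    have e : B ^ 13 = pEval (12 * Pk 4) * g + pEval (9 * Qk 4) := by
      simp only [pEval_eq, map_mul, map_ofNat] at hg' ⊢
      linear_combination -hg'
    have dP : (12 * Pk 4 : Polynomial (ZMod 13)).natDegree ≤ 8 := by
      rw [Pk]; compute_degree
    have dQ : (9 * Qk 4 : Polynomial (ZMod 13)).natDegree ≤ 8 := by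
      rw [Qk_four]; compute_degree!
    have low : ∀ p : Polynomial (ZMod 13), p.natDegree ≤ 8 →
        ((-8 : ℤ) : WithTop ℤ) ≤ (pEval p).orderTop := fun p hp =>
      le_trans (by norm_cast; omega) (le_orderTop_pEval p)
    have l1 : ((-8 : ℤ) : WithTop ℤ) ≤ (pEval (12 * Pk 4) * g).orderTop := by
      refine le_trans ?_ HahnSeries.orderTop_add_le_mul
      simpa using add_le_add (low _ dP) hg0
    have l2 : ((-8 : ℤ) : WithTop ℤ) ≤ (B ^ 13).orderTop := by
      rw [e]
      exact (le_min l1 (low _ dQ)).trans HahnSeries.min_orderTop_le_orderTop_add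
    have nB := pow_ne_zero 13 (ne_zero_of_adeg_pos dB)
    rw [← HahnSeries.order_eq_orderTop_of_ne_zero nB, HahnSeries.order_pow] at l2
    have l3 : (-8 : ℤ) ≤ 13 • B.order := by exact_mod_cast l2
    rw [nsmul_eq_mul] at l3
    unfold adeg at dB
    push_cast at l3
    omega
  have c5 : (5 : ZMod 13) ≠ 0 := by decide
  have c1 : (1 : ZMod 13) ≠ 0 := by decide
  have c11 : (11 : ZMod 13) ≠ 0 := by decide
  have c9 : (9 : ZMod 13) ≠ 0 := by decide
  have c12 : (12 : ZMod 13) ≠ 0 := by decide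
  obtain ⟨g6, h6⟩ : ∃ x, x = pEval (Polynomial.C 5 * Polynomial.X) + g⁻¹ := ⟨_, rfl⟩
  have d6 : 0 < adeg g6 := h6 ▸ adeg_linear_pos c5 dg
  obtain ⟨g5, h5⟩ : ∃ x, x = pEval (Polynomial.C 1 * Polynomial.X) + g6⁻¹ := ⟨_, rfl⟩
  have d5 : 0 < adeg g5 := h5 ▸ adeg_linear_pos c1 d6
  obtain ⟨g4, h4⟩ : ∃ x, x = pEval (Polynomial.C 11 * Polynomial.X) + g5⁻¹ := ⟨_, rfl⟩
  have d4 : 0 < adeg g4 := h4 ▸ adeg_linear_pos c11 d5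
  obtain ⟨g3, h3⟩ : ∃ x, x = pEval (Polynomial.C 9 * Polynomial.X) + g4⁻¹ := ⟨_, rfl⟩
  have d3 : 0 < adeg g3 := h3 ▸ adeg_linear_pos c9 d4
  obtain ⟨g2, h2⟩ : ∃ x, x = pEval (Polynomial.C 12 * Polynomial.X) + g3⁻¹ := ⟨_, rfl⟩
  have d2 : 0 < adeg g2 := h2 ▸ adeg_linear_pos c12 d3
  have h1 : B = pEval (Polynomial.C 5 * Polynomial.X) + g2⁻¹ := by
    have hX : pEvalHom (ZMod 13) Polynomial.X = Tval (ZMod 13) := pEval_X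
    have hP : pEval (Pk 4 : Polynomial (ZMod 13)) = (Tval (ZMod 13) ^ 2 - 1) ^ 4 := by
      rw [Pk, pEval_eq]; simp only [map_sub, map_pow, map_one, hX]
    have hQ : pEval (Qk 4 : Polynomial (ZMod 13)) = 2 * Tval (ZMod 13) ^ 7
        + 2 * Tval (ZMod 13) ^ 5 + Tval (ZMod 13) ^ 3 - Tval (ZMod 13) := by
      rw [Qk_four, pEval_eq]; simp only [map_sub, map_add, map_mul, map_pow, map_ofNat, hX]
    rw [hP] at hg' hPne
    rw [hQ] at hg'
    simp only [pEval_eq, map_mul, map_ofNat, map_one, one_mul, hX] at h2 h3 h4 h5 h6 ⊢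
    exact chain_eq h13 hB hPne hg' (ne_zero_of_adeg_pos dg) (ne_zero_of_adeg_pos d6)
      (ne_zero_of_adeg_pos d5) (ne_zero_of_adeg_pos d4) (ne_zero_of_adeg_pos d3)
      (ne_zero_of_adeg_pos d2) h6 h5 h4 h3 h2
  have irr : g ∉ ratSub (ZMod 13) := by
    intro h
    refine not_rational hB dB ?_
    have m : ∀ {c : ZMod 13} {x : LaurentSeries (ZMod 13)}, x ∈ ratSub (ZMod 13) →
        pEval (Polynomial.C c * Polynomial.X) + x⁻¹ ∈ ratSub (ZMod 13) :=
      fun hx => add_mem (pEval_mem_ratSub _) (inv_mem hx)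
    rw [h1, h2, h3, h4, h5, h6]
    exact m (m (m (m (m (m h)))))
  obtain ⟨a, β, hcf⟩ := exists_cf g irr dg
  have hfin := hcf.cons c5
  rw [← h6] at hfin
  replace hfin := hfin.cons c1
  rw [← h5] at hfin
  replace hfin := hfin.cons c11
  rw [← h4] at hfin
  replace hfin := hfin.cons c9
  rw [← h3] at hfin
  replace hfin := hfin.cons c12
  rw [← h2] at hfin
  replace hfin := hfin.cons c5
  rw [← h1] at hfin
  refine ⟨_, _, hfin, by simp, by simp, by simp, by simp, by simp, by simp, ?_⟩
  -- Index 7 is past the six prepended terms, so it is index 1 of the expansion of `g`.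
  simp [hcf.1, hg']

/-- Let `α ∈ F(13)` satisfy `−α⁴/12 − Tα³ + α² + 1 = 0` with `|α| > 1`,
let `v ∈ F₁₆₉` with `v² = 5`, and `β(T) = v α(vT)`. Then `β ∈ F(13)` (its coefficients lie
in `F₁₃`), the first six partial quotients of `β` are `(5T, 12T, 9T, 11T, T, 5T)`, and
`β¹³ = 12 P₄ β₇ + 9 Q₄`. -/
theorem stmt9 (α : LaurentSeries (ZMod 13)) (hdeg : 0 < adeg α)
    (hα : -α ^ 4 / 12 - Tval (ZMod 13) * α ^ 3 + α ^ 2 + 1 = 0)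
    (v : GaloisField 13 2) (hv : v ^ 2 = 5) :
    (∀ n : ℤ,
      (HahnSeries.C v *
        scaleT v (lsMap (algebraMap (ZMod 13) (GaloisField 13 2)) α)).coeff n
        ∈ Set.range (algebraMap (ZMod 13) (GaloisField 13 2))) ∧
    ∃ (b : ℕ → Polynomial (ZMod 13)) (βc : ℕ → LaurentSeries (GaloisField 13 2)),
      IsCFOf (HahnSeries.C v * scaleT v (lsMap (algebraMap (ZMod 13) (GaloisField 13 2)) α))
        (fun n => (b n).map (algebraMap (ZMod 13) (GaloisField 13 2))) βc ∧
      b 1 = Polynomial.C 5 * Polynomial.X ∧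
      b 2 = Polynomial.C 12 * Polynomial.X ∧
      b 3 = Polynomial.C 9 * Polynomial.X ∧
      b 4 = Polynomial.C 11 * Polynomial.X ∧
      b 5 = Polynomial.X ∧
      b 6 = Polynomial.C 5 * Polynomial.X ∧
      (HahnSeries.C v * scaleT v (lsMap (algebraMap (ZMod 13) (GaloisField 13 2)) α)) ^ 13
        = 12 * pEval ((Pk 4 : Polynomial (ZMod 13)).map (algebraMap (ZMod 13) (GaloisField 13 2)))
            * βc 7
        + 9 * pEval ((Qk 4 : Polynomial (ZMod 13)).map (algebraMap (ZMod 13) (GaloisField 13 2))) := by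
  have hbase : α ^ 4 - Tval (ZMod 13) * α ^ 3 + α ^ 2 + 1 = 0 := by
    have h13 : (13 : LaurentSeries (ZMod 13)) = 0 := thirteen_eq_zero (by decide)
    have h12 : (12 : LaurentSeries (ZMod 13)) = -1 := by linear_combination h13
    rw [h12, neg_div_neg_eq, div_one] at hα
    exact hα
  set f := algebraMap (ZMod 13) (GaloisField 13 2) with hf
  have hf5 : f 5 = 5 := map_ofNat f 5
  have hv0 : v ≠ 0 := by
    rintro rfl
    rw [zero_pow two_ne_zero, ← hf5, eq_comm, map_eq_zero] at hv
    exact absurd hv (by decide)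
  have hK : (13 : LaurentSeries (GaloisField 13 2)) = 0 := by
    apply thirteen_eq_zero
    rw [← map_ofNat f 13, show (OfNat.ofNat 13 : ZMod 13) = 0 by decide, map_zero]
  rw [lsHom_apply, scaleHom_apply v hv0]
  set β := HahnSeries.C v * scaleHom v hv0 (lsHom f α) with hβ
  have hC5 : (HahnSeries.C v : LaurentSeries (GaloisField 13 2)) ^ 2 = 5 := by
    rw [← map_pow, hv, map_ofNat]
  have hquart : β ^ 4 - 5 * Tval (GaloisField 13 2) * β ^ 3 + 5 * β ^ 2 - 1 = 0 := by
    have h := congrArg (fun x => scaleHom v hv0 (lsHom f x)) hbase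
    simp only [map_add, map_sub, map_mul, map_pow, map_one, map_zero, lsHom_Tval,
      scaleHom_Tval] at h
    rw [hβ]
    generalize (HahnSeries.C v : LaurentSeries (GaloisField 13 2)) = w at *
    generalize scaleHom v hv0 (lsHom f α) = A at *
    linear_combination w ^ 4 * h + (Tval (GaloisField 13 2) * A ^ 3 * w ^ 3 - A ^ 2 * w ^ 2
      - w ^ 2 - 5) * hC5 - 2 * hK
  have hrange : ∀ n : ℤ, β.coeff n ∈ Set.range f := by
    intro n
    have hcoeff : β.coeff n = v * (v ^ (-n) * f (α.coeff n)) := by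
      rw [hβ, HahnSeries.C_apply, HahnSeries.coeff_single_zero_mul, scaleHom_coeff, lsHom_coeff]
    rcases Int.even_or_odd n with hn | ⟨k, rfl⟩
    · rw [hcoeff, large_root_odd (by decide) hbase hdeg hn]
      exact ⟨0, by simp⟩
    · refine ⟨5 ^ (-k) * α.coeff (2 * k + 1), ?_⟩
      rw [hcoeff, map_mul, map_zpow₀, hf5, ← hv, ← mul_assoc, ← zpow_natCast, ← zpow_mul,
        ← zpow_one_add₀ hv0]
      congr 2
      push_cast; ring
  refine ⟨hrange, ?_⟩
  -- Descend `β` to a series over `F₁₃`; the quartic descends since `lsHom f` is injective.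
  choose c hc using hrange
  let β₀ : LaurentSeries (ZMod 13) :=
    { coeff := c
      isPWO_support' := β.isPWO_support'.mono fun n hn => by
        rw [Function.mem_support] at hn ⊢
        rwa [← hc, _root_.map_ne_zero] }
  have hβ₀ : lsHom f β₀ = β := by ext n; exact hc n
  have hquart₀ : β₀ ^ 4 - 5 * Tval (ZMod 13) * β₀ ^ 3 + 5 * β₀ ^ 2 - 1 = 0 := by
    apply (lsHom f).injective
    simp only [map_add, map_sub, map_mul, map_pow, map_one, map_zero, map_ofNat, lsHom_Tval, hβ₀]
    exact hquart
  have hdeg₀ : 0 < adeg β₀ := by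
    rwa [← adeg_lsHom f, hβ₀, hβ, adeg_C_mul hv0, adeg_scaleHom, adeg_lsHom]
  obtain ⟨b, βc, hcf, h1, h2, h3, h4, h5, h6, h7⟩ := main_expansion hquart₀ hdeg₀
  refine ⟨b, fun n => lsHom f (βc n), hβ₀ ▸ hcf.map f, h1, h2, h3, h4, h5, h6, ?_⟩
  have := congrArg (lsHom f) h7
  simpa only [map_add, map_mul, map_pow, map_ofNat, hβ₀, lsHom_pEval] using this
end
end

section
/- Let p be an odd prime and k an integer with 1 ≤ k < p/2. Then in F_p(T) one has the finite continued fraction expansion P_k/Q_k = [v_{1,k}T, v_{2,k}T, …, v_{2k,k}T], and also P_k/Q_k = −4k²θ_k² [v_{2k,k}T, v_{2k−1,k}T, …, v_{1,k}T]. -/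
/-!
The expansion comes from running the Euclidean algorithm on `P_k` and `Q_k` with the prescribed
quotients `v_i T`: put `R_0 = P_k`, `R_1 = Q_k`, `R_{i+1} = R_{i-1} - v_i T R_i`. Let `c_0 = 0` and
`c_i = -(2k - 2i + 1) / v_i`. The recursion for `v` says exactly that `c_{i+1} c_i = i (2k - i)`,
whence `c_{i+1} = c_{i-1} - v_i`. Starting from `(T² - 1) P_k' = 2k T P_k` and
`(T² - 1) Q_k' = P_k`, induction gives (`Rseq_system`)

* `(T² - 1) R_i' = (i - 1) T R_i - c_i R_{i-1}`,
* `(T² - 1) R_i' = (2k - i) T R_i - c_i R_{i+1}`.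

By the first equation `R_i = 0` would force `R_{i-1} = 0`, so no `R_i` with `i ≤ 2k` vanishes.
By the second one, and parity, `deg R_i ≤ 2k - i` (`Rseq_coeff`), so `R_{2k+1} = 0`. Hence the
algorithm stops exactly after `2k` steps, and `fcf_eq_div` gives the first expansion.

The products `v_{i+1} v_i` are invariant under `i ↦ 2k - i`, so reversing the sequence `v` multiplies
its terms alternately by `μ⁻¹` and `μ`, where `μ = v_1 / v_{2k}` (`vseq_reflect`). This amounts to
multiplying the continued fraction by `μ⁻¹`. A telescoping product shows `μ = -4 k² θ_k²`
(`vseq_last`).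
-/

noncomputable section
open Polynomial

/-! ### The partial quotients -/

/-- The part of the characteristic hypothesis `2k < p` used below: the nonzero integers of absolute
value at most `2k` stay nonzero in `F`. -/
def SmallNZ (F : Type) [Field F] (k : ℕ) : Prop :=
  ∀ n : ℤ, n ≠ 0 → |n| ≤ 2 * k → (n : F) ≠ 0

lemma smallNZ_zmod (p : ℕ) [Fact p.Prime] (k : ℕ) (hk2 : 2 * k < p) : SmallNZ (ZMod p) k := by
  intro n hn hle h
  rw [ZMod.intCast_zmod_eq_zero_iff_dvd] at h
  have := Int.le_of_dvd (abs_pos.mpr hn) ((dvd_abs _ _).mpr h)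
  omega

section
variable {F : Type} [Field F] {k : ℕ}

lemma vseq_succ (i : ℕ) (hi : 1 ≤ i) :
    vseq F k (i + 1) = ((2 * (k : F) - 2 * i - 1) * (2 * k - 2 * i + 1)) *
      (((i : F) * (2 * k - i))⁻¹) * (vseq F k i)⁻¹ := by
  obtain ⟨j, rfl⟩ : ∃ j, i = j + 1 := ⟨i - 1, by omega⟩
  rw [vseq]
  · push_cast
    ring
  · simp

lemma SmallNZ.nat (H : SmallNZ F k) (n : ℕ) (h0 : 1 ≤ n) (h : n ≤ 2 * k) : (n : F) ≠ 0 := by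
  have := H n (by omega) (by rw [abs_le]; omega)
  simpa using this

lemma SmallNZ.sub (H : SmallNZ F k) (n : ℕ) (h : n < 2 * k) : (2 * k - n : F) ≠ 0 := by
  have := H (2 * k - n) (by omega) (by rw [abs_le]; omega)
  simpa using this

/-- Being odd, `2k - 2i + 1` is a nonzero integer. -/
lemma SmallNZ.odd (H : SmallNZ F k) (i : ℕ) (h0 : 1 ≤ i) (h : i ≤ 2 * k) :
    (2 * k - 2 * i + 1 : F) ≠ 0 := by
  have := H (2 * k - 2 * i + 1) (by omega) (by rw [abs_le]; omega)
  simpa using this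

lemma vseq_ne_zero (H : SmallNZ F k) (i : ℕ) (h0 : 1 ≤ i) (h : i ≤ 2 * k) : vseq F k i ≠ 0 := by
  induction i, h0 using Nat.le_induction with
  | base =>
    have := H.odd 1 le_rfl h
    rw [vseq]
    intro h'
    apply this
    push_cast
    linear_combination h'
  | succ i hi ih =>
    rw [vseq_succ i hi]
    have h1 := H.odd i hi (by omega)
    have h2 := H.odd (i + 1) (by omega) h
    have h2' : (2 * k - 2 * i - 1 : F) ≠ 0 := by
      intro h'
      apply h2
      push_cast
      linear_combination h'
    exact mul_ne_zero (mul_ne_zero (mul_ne_zero h2' h1)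
      (inv_ne_zero (mul_ne_zero (H.nat i hi (by omega)) (H.sub i (by omega)))))
      (inv_ne_zero (ih (by omega)))

lemma vseq_mul (H : SmallNZ F k) (i : ℕ) (h0 : 1 ≤ i) (h : i < 2 * k) :
    vseq F k (i + 1) * vseq F k i * (i * (2 * k - i)) =
      (2 * k - 2 * i - 1) * (2 * k - 2 * i + 1) := by
  rw [vseq_succ i h0]
  have h1 := vseq_ne_zero H i h0 h.le
  have h2 := H.nat i h0 h.le
  have h3 := H.sub i h
  field_simp

/-- The coefficients `c_i` of the differential system satisfied by the remainders: `c_0 = 0` and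
`c_i v_i = -(2k - 2i + 1)` for `i ≥ 1`. -/
def cseq (F : Type) [Field F] (k : ℕ) : ℕ → F
  | 0 => 0
  | i + 1 => -(2 * k - 2 * (i + 1 : ℕ) + 1) * (vseq F k (i + 1))⁻¹

lemma cseq_mul_vseq (H : SmallNZ F k) (i : ℕ) (h0 : 1 ≤ i) (h : i ≤ 2 * k) :
    cseq F k i * vseq F k i = -(2 * k - 2 * i + 1) := by
  obtain ⟨j, rfl⟩ : ∃ j, i = j + 1 := ⟨i - 1, by omega⟩
  have h1 := vseq_ne_zero H (j + 1) h0 h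
  rw [cseq, mul_assoc, inv_mul_cancel₀ h1, mul_one]

lemma cseq_ne_zero (H : SmallNZ F k) (i : ℕ) (h0 : 1 ≤ i) (h : i ≤ 2 * k) : cseq F k i ≠ 0 := by
  intro h'
  have := cseq_mul_vseq H i h0 h
  rw [h', zero_mul] at this
  exact H.odd i h0 h (by linear_combination this)

lemma cseq_mul (H : SmallNZ F k) (i : ℕ) (h : i < 2 * k) :
    cseq F k (i + 1) * cseq F k i = i * (2 * k - i) := by
  rcases Nat.eq_zero_or_pos i with rfl | h0
  · simp [cseq]
  have h1 := cseq_mul_vseq H i h0 h.le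
  have h2 := cseq_mul_vseq H (i + 1) (by omega) h
  have h3 := vseq_mul H i h0 h
  have hv1 := vseq_ne_zero H i h0 h.le
  have hv2 := vseq_ne_zero H (i + 1) (by omega) h
  push_cast at h2
  apply mul_right_cancel₀ (mul_ne_zero hv2 hv1)
  linear_combination h1 * cseq F k (i + 1) * vseq F k (i + 1) - (2 * k - 2 * i + 1) * h2 - h3

/-- Multiplied by `c_{i+1}`, this is the telescoping of `c_{i+1} c_i = i (2k - i)`. -/
lemma cseq_succ (H : SmallNZ F k) (i : ℕ) (h : i + 1 < 2 * k) :
    cseq F k (i + 2) = cseq F k i - vseq F k (i + 1) := by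
  have h0 := cseq_ne_zero H (i + 1) (by omega) h.le
  have h1 := cseq_mul H i (by omega)
  have h2 := cseq_mul H (i + 1) h
  have h3 := cseq_mul_vseq H (i + 1) (by omega) h.le
  apply mul_right_cancel₀ h0
  push_cast at h2 h3
  linear_combination h2 - h1 + h3

/-! ### The remainders of the Euclidean algorithm -/

/-- The remainders of the Euclidean algorithm applied to `P_k` and `Q_k`, with `v_i T` as the
prescribed successive quotients. -/
def Rseq (F : Type) [Field F] (k : ℕ) : ℕ → F[X]
  | 0 => Pk k
  | 1 => Qk k
  | i + 2 => Rseq F k i - C (vseq F k (i + 1)) * X * Rseq F k (i + 1)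

/-- `Pk` is a polynomial in `X ^ 2` of degree `2k`. -/
lemma coeff_Pk (k n : ℕ) (h : (Pk k : F[X]).coeff n ≠ 0) : n ≤ 2 * k ∧ Even n := by
  constructor
  · refine (le_natDegree_of_ne_zero h).trans ?_
    unfold Pk
    refine natDegree_pow_le.trans ?_
    have : (X ^ 2 - 1 : F[X]).natDegree ≤ 2 := by compute_degree
    nlinarith
  · have : (Pk k : F[X]) = expand F 2 ((X - 1) ^ k) := by simp [Pk]
    rw [this, coeff_expand (by norm_num)] at h
    split_ifs at h with h2
    · exact even_iff_two_dvd.mpr h2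
    · exact absurd rfl h

lemma coeff_polyInt_succ (f : F[X]) (n : ℕ) :
    (polyInt f).coeff (n + 1) = f.coeff n * ((n : F) + 1)⁻¹ := by
  unfold polyInt
  simp only [finsetSum_coeff, coeff_C_mul, coeff_X_pow, Nat.add_right_cancel_iff]
  rw [Finset.sum_eq_single n]
  · simp
  · intro b _ hb
    simp [Ne.symm hb]
  · intro hn
    rw [coeff_eq_zero_of_natDegree_lt (by simpa using hn)]
    simp

lemma coeff_polyInt_zero (f : F[X]) : (polyInt f).coeff 0 = 0 := by
  simp [polyInt, coeff_X_pow]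

lemma derivative_Qk (H : SmallNZ F k) (hk : 1 ≤ k) :
    derivative (Qk k : F[X]) = Pk (k - 1) := by
  ext n
  rw [coeff_derivative, Qk, coeff_polyInt_succ]
  by_cases h : (Pk (k - 1) : F[X]).coeff n = 0
  · simp [h]
  · have h1 := (coeff_Pk (k - 1) n h).1
    have h2 := H.nat (n + 1) (by omega) (by omega)
    push_cast at h2
    field_simp

lemma Rseq_deriv_zero (hk : 1 ≤ k) :
    (X ^ 2 - 1) * derivative (Rseq F k 0) = 2 * (k : F[X]) * X * Rseq F k 0 := by
  obtain ⟨m, rfl⟩ : ∃ m, k = m + 1 := ⟨k - 1, by omega⟩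
  simp only [Rseq, Pk, derivative_pow_succ]
  simp
  ring

lemma Rseq_deriv_one (H : SmallNZ F k) (hk : 1 ≤ k) :
    (X ^ 2 - 1) * derivative (Rseq F k 1) = Rseq F k 0 := by
  rw [show Rseq F k 1 = Qk k from rfl, derivative_Qk H hk]
  obtain ⟨m, rfl⟩ : ∃ m, k = m + 1 := ⟨k - 1, by omega⟩
  simp only [Rseq, Pk]
  simp
  ring

/-- The linear differential system that relates consecutive remainders. The second equation is the
first one, at the index `i + 1`, after elimination of `R_i` in favour of `R_{i+2}`. -/
lemma Rseq_system (H : SmallNZ F k) (hk : 1 ≤ k) (i : ℕ) (hi : i + 1 ≤ 2 * k) :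
    (X ^ 2 - 1) * derivative (Rseq F k i) =
        (2 * (k : F[X]) - (i : F[X])) * X * Rseq F k i - C (cseq F k i) * Rseq F k (i + 1) ∧
    (X ^ 2 - 1) * derivative (Rseq F k (i + 1)) =
        (i : F[X]) * X * Rseq F k (i + 1) - C (cseq F k (i + 1)) * Rseq F k i ∧
    (X ^ 2 - 1) * derivative (Rseq F k (i + 1)) =
        (2 * (k : F[X]) - ((i + 1 : ℕ) : F[X])) * X * Rseq F k (i + 1)
          - C (cseq F k (i + 1)) * Rseq F k (i + 2) := by
  have third : ∀ i : ℕ, i + 1 ≤ 2 * k → (X ^ 2 - 1) * derivative (Rseq F k (i + 1)) =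
        (i : F[X]) * X * Rseq F k (i + 1) - C (cseq F k (i + 1)) * Rseq F k i →
      (X ^ 2 - 1) * derivative (Rseq F k (i + 1)) =
        (2 * (k : F[X]) - ((i + 1 : ℕ) : F[X])) * X * Rseq F k (i + 1)
          - C (cseq F k (i + 1)) * Rseq F k (i + 2) := by
    intro i hi h
    have hc := congrArg (C : F → F[X]) (cseq_mul_vseq H (i + 1) (by omega) hi)
    simp only [map_mul, map_neg, map_sub, map_add, map_natCast, map_one, C_ofNat] at hc
    rw [h, Rseq]
    push_cast at hc ⊢
    linear_combination X * Rseq F k (i + 1) * -hc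
  induction i with
  | zero =>
    have h1 : (X ^ 2 - 1) * derivative (Rseq F k (0 + 1)) =
        ((0 : ℕ) : F[X]) * X * Rseq F k (0 + 1) - C (cseq F k (0 + 1)) * Rseq F k 0 := by
      have hc : cseq F k (0 + 1) = -1 := by
        have h1 := cseq_mul_vseq H (0 + 1) le_rfl hi
        have h2 := vseq_ne_zero H (0 + 1) le_rfl hi
        apply mul_right_cancel₀ h2
        rw [h1]
        simp [vseq]
        ring
      rw [hc]
      simpa using Rseq_deriv_one H hk
    refine ⟨?_, h1, third 0 hi h1⟩
    rw [Rseq_deriv_zero hk]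
    simp [cseq]
  | succ i ih =>
    obtain ⟨e1, e2, e3⟩ := ih (by omega)
    have h1 : (X ^ 2 - 1) * derivative (Rseq F k (i + 1 + 1)) =
        ((i + 1 : ℕ) : F[X]) * X * Rseq F k (i + 1 + 1)
          - C (cseq F k (i + 1 + 1)) * Rseq F k (i + 1) := by
      have hc := congrArg (C : F → F[X]) (cseq_mul_vseq H (i + 1) (by omega) (by omega))
      simp only [map_mul, map_neg, map_sub, map_add, map_natCast, map_one, C_ofNat] at hc
      rw [cseq_succ H i (by omega), Rseq]
      simp only [derivative_sub, derivative_mul, derivative_C, derivative_X, C_sub]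
      push_cast at hc ⊢
      linear_combination e1 - C (vseq F k (i + 1)) * X * e2 + X * Rseq F k i * hc
    exact ⟨e3, h1, third (i + 1) hi h1⟩

lemma Rseq_ne_zero (H : SmallNZ F k) (hk : 1 ≤ k) (i : ℕ) (hi : i ≤ 2 * k) :
    Rseq F k i ≠ 0 := by
  induction i with
  | zero =>
    rw [Rseq, Pk]
    exact pow_ne_zero _ (X_pow_sub_C_ne_zero (n := 2) (by norm_num) (1 : F))
  | succ i ih =>
    intro h
    obtain ⟨-, e, -⟩ := Rseq_system H hk i hi
    rw [h] at e
    have h0 : C (cseq F k (i + 1)) * Rseq F k i = 0 := by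
      simpa using e.symm
    rcases mul_eq_zero.mp h0 with h1 | h1
    · exact cseq_ne_zero H (i + 1) (by omega) hi (C_eq_zero.mp h1)
    · exact ih (by omega) h1

/-- The remainder `R_i` has degree at most `2k - i` and the parity of `i`. In the step, the
coefficients of degree `2k - i + 1` cancel in the differential equation that expresses `R_{i+1}`
through `R_i` and its derivative. -/
lemma Rseq_coeff (H : SmallNZ F k) (hk : 1 ≤ k) (i : ℕ) (hi : i ≤ 2 * k) :
    ∀ n, (Rseq F k (i + 1)).coeff n ≠ 0 → n + (i + 1) ≤ 2 * k ∧ Even (n + (i + 1)) := by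
  induction i with
  | zero =>
    intro n hn
    rw [zero_add, Rseq, Qk] at hn
    cases n with
    | zero => exact absurd (coeff_polyInt_zero _) hn
    | succ n =>
      rw [coeff_polyInt_succ] at hn
      obtain ⟨h1, h2⟩ := coeff_Pk (k - 1) n (left_ne_zero_of_mul hn)
      exact ⟨by omega, by grind⟩
  | succ i ih =>
    intro n hn
    have ih := ih (by omega)
    obtain ⟨-, -, e⟩ := Rseq_system H hk i hi
    have hc := cseq_ne_zero H (i + 1) (by omega) hi
    set R := Rseq F k (i + 1)
    have e' : C (cseq F k (i + 1)) * Rseq F k (i + 1 + 1) =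
        C (2 * (k : F) - (i + 1 : ℕ)) * (R * X) - (derivative R * X ^ 2 - derivative R) := by
      simp only [map_sub, map_mul, map_natCast, C_ofNat]
      linear_combination e
    have e2 := congrArg (fun f => coeff f n) e'
    cases n with
    | zero =>
      simp only [coeff_C_mul, coeff_sub, coeff_mul_X_zero, coeff_derivative, mul_zero,
        coeff_mul_X_pow'] at e2
      have : R.coeff (0 + 1) ≠ 0 := by
        intro h
        rw [h] at e2
        simp [hc, hn] at e2
      obtain ⟨h1, h2⟩ := ih _ this
      exact ⟨by omega, by grind⟩
    | succ n =>
      have e3 : (derivative R * X ^ 2).coeff (n + 1) = n * R.coeff n := by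
        cases n with
        | zero => simp [coeff_mul_X_pow']
        | succ n =>
          rw [show n + 1 + 1 = n + 2 from rfl, coeff_mul_X_pow, coeff_derivative]
          push_cast
          ring
      simp only [coeff_C_mul, coeff_sub, coeff_mul_X, e3, coeff_derivative] at e2
      by_cases h : R.coeff (n + 1 + 1) = 0
      · rw [h] at e2
        have h0 : (2 * (k : F) - (i + 1 : ℕ) - n) * R.coeff n ≠ 0 := by
          intro h'
          apply mul_ne_zero hc hn
          rw [e2]
          linear_combination h'
        obtain ⟨h1, h2⟩ := ih n (right_ne_zero_of_mul h0)
        have h3 : n + (i + 1) ≠ 2 * k := by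
          intro h'
          apply left_ne_zero_of_mul h0
          have := congrArg (Nat.cast : ℕ → F) h'
          push_cast at this ⊢
          linear_combination -this
        exact ⟨by grind, by grind⟩
      · obtain ⟨h1, h2⟩ := ih _ h
        exact ⟨by omega, by grind⟩

lemma Rseq_last (H : SmallNZ F k) (hk : 1 ≤ k) : Rseq F k (2 * k + 1) = 0 := by
  ext n
  by_contra h
  have := (Rseq_coeff H hk (2 * k) le_rfl n h).1
  omega

/-! ### From remainders to continued fractions -/

lemma fcf_eq_div {K : Type} [Field K] (n : ℕ) : ∀ g R : ℕ → K,
    (∀ i, i ≤ n → R (i + 1) ≠ 0) → (∀ i, i ≤ n → R i = g i * R (i + 1) + R (i + 2)) →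
    R (n + 2) = 0 → fcf ((List.range (n + 1)).map g) = R 0 / R 1 := by
  induction n with
  | zero =>
    intro g R h1 h2 h3
    have a := h1 0 le_rfl
    have b := h2 0 le_rfl
    simp only [zero_add] at a b h3
    simp only [zero_add, List.range_one, List.map_cons, List.map_nil, fcf]
    rw [b, h3]
    field_simp
    simp
  | succ n ih =>
    intro g R h1 h2 h3
    have key := ih (fun i => g (i + 1)) (fun i => R (i + 1))
      (fun i hi => h1 (i + 1) (by omega)) (fun i hi => h2 (i + 1) (by omega)) h3
    have hl : (List.range (n + 1)).map (fun i => g (i + 1)) =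
        g 1 :: ((List.range n).map (fun i => g (i + 2))) := by
      rw [List.range_succ_eq_map]
      simp [Function.comp_def]
    have hl2 : (List.range (n + 1 + 1)).map g =
        g 0 :: (List.range (n + 1)).map (fun i => g (i + 1)) := by
      rw [List.range_succ_eq_map]
      simp [Function.comp_def]
    rw [hl2, hl, fcf, ← hl, key, inv_div, h2 0 (by omega)]
    have a := h1 0 (by omega)
    simp only [zero_add] at a ⊢
    field_simp

/-! ### Reversing the continued fraction -/

/-- Closed form of the partial quotients of even index, from
`v_{i+2} / v_i = (v_{i+2} v_{i+1}) / (v_{i+1} v_i)`. -/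
lemma vseq_even (H : SmallNZ F k) (j : ℕ) (hj : j + 1 ≤ k) :
    vseq F k (2 * j + 2) * (2 * k - 1) = (2 * k - 4 * j - 3) *
      ((∏ l ∈ Finset.range j, ((2 * l + 2 : F) / (2 * l + 3))) *
       ∏ l ∈ Finset.range j, ((2 * k - 2 * l - 2 : F) / (2 * k - 2 * l - 3))) := by
  induction j with
  | zero =>
    have h := vseq_mul H 1 le_rfl (by omega)
    have h1 := H.sub 1 (by omega)
    have hv : vseq F k 1 = 2 * k - 1 := by simp [vseq]
    rw [hv] at h
    push_cast at h h1
    simp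
    apply mul_right_cancel₀ h1
    linear_combination h
  | succ j ih =>
    have ih := ih (by omega)
    rw [Finset.prod_range_succ, Finset.prod_range_succ]
    set A := ∏ l ∈ Finset.range j, ((2 * l + 2 : F) / (2 * l + 3))
    set B := ∏ l ∈ Finset.range j, ((2 * k - 2 * l - 2 : F) / (2 * k - 2 * l - 3))
    have h1 := vseq_mul H (2 * j + 2) (by omega) (by omega)
    have h2 := vseq_mul H (2 * j + 3) (by omega) (by omega)
    have n1 := H.nat (2 * j + 3) (by omega) (by omega)
    have n2 := H.sub (2 * j + 3) (by omega)
    have o1 := H.odd (2 * j + 3) (by omega) (by omega)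
    have o2 := H.odd (2 * j + 2) (by omega) (by omega)
    have v1 := vseq_ne_zero H (2 * j + 3) (by omega) (by omega)
    rw [show 2 * (j + 1) + 2 = 2 * j + 4 by ring]
    rw [show 2 * j + 2 + 1 = 2 * j + 3 by ring] at h1
    rw [show 2 * j + 3 + 1 = 2 * j + 4 by ring] at h2
    push_cast at h1 h2 n1 n2 o1 o2 ⊢
    generalize vseq F k (2 * j + 2) = a at *
    generalize vseq F k (2 * j + 3) = b at *
    generalize vseq F k (2 * j + 4) = c at *
    generalize (j : F) = y at *
    generalize (k : F) = x at *
    have n2' : (2 * x - 2 * y - 3) ≠ 0 := by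
      intro h
      apply n2
      linear_combination h
    have o1' : 2 * x - 4 * y - 5 ≠ 0 := by
      intro h
      apply o1
      linear_combination h
    have o2' : 2 * x - 4 * y - 3 ≠ 0 := by
      intro h
      apply o2
      linear_combination h
    have step : c * ((2 * y + 3) * (2 * x - 2 * y - 3)) * (2 * x - 4 * y - 3) =
        a * ((2 * y + 2) * (2 * x - 2 * y - 2)) * (2 * x - 4 * y - 7) := by
      apply mul_right_cancel₀ (mul_ne_zero v1 o1')
      linear_combination (2 * x - 4 * y - 3) * (2 * x - 4 * y - 5) * h2 -
        (2 * x - 4 * y - 7) * (2 * x - 4 * y - 5) * h1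
    rw [mul_div_assoc', mul_div_assoc', div_mul_div_comm, mul_div_assoc', eq_div_iff
      (mul_ne_zero n1 n2')]
    apply mul_right_cancel₀ o2'
    linear_combination (2 * x - 1) * step + ((2 * y + 2) * (2 * x - 2 * y - 2)) *
      (2 * x - 4 * y - 7) * ih

lemma theta_sq (H : SmallNZ F k) :
    theta F k ^ 2 = (∏ l ∈ Finset.range k, ((2 * l + 1 : F) / (2 * l + 2))) ^ 2 := by
  rw [theta, mul_pow, ← pow_mul, mul_comm k 2, pow_mul, neg_one_sq, one_pow, one_mul]
  congr 1
  rw [← Finset.Ico_add_one_right_eq_Icc, Finset.prod_Ico_eq_prod_range]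
  refine Finset.prod_congr (by simp) fun l hl => ?_
  have h := H.nat (2 * l + 2) (by omega) (by simp at hl; omega)
  push_cast at h ⊢
  rw [show (2 * (1 + l) : F) = 2 * l + 2 by ring, eq_div_iff h, sub_mul, inv_mul_cancel₀ h]
  ring

/-- Wallis-type products: both are quotients of the product of the even numbers by that of the odd
numbers, up to the boundary factors. -/
lemma wallis (H : SmallNZ F k) (n : ℕ) (hn : n + 1 ≤ k) :
    (∏ l ∈ Finset.range (n + 1), ((2 * l + 1 : F) / (2 * l + 2))) * (2 * n + 2) *
        (∏ l ∈ Finset.range n, ((2 * l + 2 : F) / (2 * l + 3))) = 1 ∧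
    (∏ l ∈ Finset.range (n + 1), ((2 * l + 1 : F) / (2 * l + 2))) * (2 * n + 2) *
        (∏ l ∈ Finset.range n, ((2 * l + 2 : F) / (2 * l + 1))) = 2 * n + 1 := by
  induction n with
  | zero =>
    have h := H.nat 2 (by omega) (by omega)
    push_cast at h
    simp [h]
  | succ n ih =>
    obtain ⟨h1, h2⟩ := ih (by omega)
    have n1 := H.nat (2 * n + 1) (by omega) (by omega)
    have n2 := H.nat (2 * n + 2) (by omega) (by omega)
    have n3 := H.nat (2 * n + 3) (by omega) (by omega)
    have n4 := H.nat (2 * n + 4) (by omega) (by omega)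
    have n4' : (2 * (n + 1) + 2 : F) ≠ 0 := by
      push_cast at n4
      intro h
      apply n4
      linear_combination h
    rw [Finset.prod_range_succ _ (n + 1), Finset.prod_range_succ _ n, Finset.prod_range_succ _ n]
    rw [Finset.prod_range_succ _ n] at h1 h2
    rw [Finset.prod_range_succ _ n]
    push_cast at *
    generalize (∏ l ∈ Finset.range n, ((2 * l + 1 : F) / (2 * l + 2))) = P at *
    generalize (∏ l ∈ Finset.range n, ((2 * l + 2 : F) / (2 * l + 3))) = A at *
    generalize (∏ l ∈ Finset.range n, ((2 * l + 2 : F) / (2 * l + 1))) = B at *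
    generalize (n : F) = y at *
    rw [mul_assoc P, div_mul_cancel₀ _ n2] at h1 h2
    have e2 : P * B = 1 := by
      apply mul_right_cancel₀ n1
      linear_combination h2
    rw [mul_assoc (P * _), div_mul_cancel₀ _ n4', mul_assoc P]
    constructor
    · rw [show (2 * (y + 1) + 1) = 2 * y + 3 by ring]
      calc _ = P * A * ((2 * y + 1) * ((2 * y + 2) / (2 * y + 2)) *
            ((2 * y + 3) / (2 * y + 3))) := by ring
        _ = _ := by
          rw [div_self n2, div_self n3]
          linear_combination h1
    · calc _ = P * B * (2 * (y + 1) + 1) * (((2 * y + 1) / (2 * y + 1)) *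
            ((2 * y + 2) / (2 * y + 2))) := by ring
        _ = _ := by
          rw [div_self n2, div_self n1, e2]
          ring

lemma vseq_last (H : SmallNZ F k) (hk : 1 ≤ k) :
    (-4 * (k : F) ^ 2 * theta F k ^ 2) * vseq F k (2 * k) = vseq F k 1 := by
  obtain ⟨m, rfl⟩ : ∃ m, k = m + 1 := ⟨k - 1, by omega⟩
  have h := vseq_even H m le_rfl
  obtain ⟨w1, w2⟩ := wallis H m le_rfl
  have hB : ∏ l ∈ Finset.range m, ((2 * ((m + 1 : ℕ) : F) - 2 * l - 2) /
      (2 * ((m + 1 : ℕ) : F) - 2 * l - 3)) =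
      ∏ l ∈ Finset.range m, ((2 * l + 2 : F) / (2 * l + 1)) := by
    rw [← Finset.prod_range_reflect]
    refine Finset.prod_congr rfl fun l hl => ?_
    have hl : l < m := by simpa using hl
    have : ((m - 1 - l : ℕ) : F) = m - 1 - l := by
      rw [Nat.sub_sub, Nat.cast_sub (by omega)]
      push_cast
      ring
    rw [this]
    push_cast
    congr 1 <;> ring
  rw [hB] at h
  have hv : vseq F (m + 1) 1 = 2 * (m + 1 : ℕ) - 1 := by simp [vseq]
  have n1 := H.nat (2 * m + 1) (by omega) (by omega)
  rw [theta_sq H, hv, show 2 * (m + 1) = 2 * m + 2 by ring]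
  generalize (∏ l ∈ Finset.range (m + 1), ((2 * l + 1 : F) / (2 * l + 2))) = P at *
  generalize (∏ l ∈ Finset.range m, ((2 * l + 2 : F) / (2 * l + 3))) = A at *
  generalize (∏ l ∈ Finset.range m, ((2 * l + 2 : F) / (2 * l + 1))) = B at *
  generalize vseq F (m + 1) (2 * m + 2) = v at *
  push_cast at *
  have h' : v = - (A * B) := by
    apply mul_right_cancel₀ n1
    linear_combination h
  rw [h']
  linear_combination (P * (2 * m + 2) * B) * w1 + w2

/-- The symmetry behind the reversed expansion: `v_{2k-i} = μ^{±1} v_{i+1}`, with a sign that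
alternates, because the products `v_{i+1} v_i` are invariant under `i ↦ 2k - i`. -/
lemma vseq_reflect (H : SmallNZ F k) (μ : F) (hμ : μ ≠ 0)
    (h1 : μ * vseq F k (2 * k) = vseq F k 1) (i : ℕ) (hi : i < 2 * k) :
    vseq F k (2 * k - i) * (if Even i then μ else μ⁻¹) = vseq F k (i + 1) := by
  induction i with
  | zero =>
    simp
    rw [mul_comm, h1]
  | succ i ih =>
    have ih := ih (by omega)
    obtain ⟨j, hj⟩ : ∃ j, 2 * k - (i + 1) = j := ⟨_, rfl⟩
    have hj' : 2 * k - i = j + 1 := by omega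
    have a := vseq_mul H (i + 1) (by omega) hi
    have b := vseq_mul H j (by omega) (by omega)
    have v1 := vseq_ne_zero H (i + 1) (by omega) hi.le
    have n1 := H.nat (i + 1) (by omega) hi.le
    have n2 := H.sub (i + 1) hi
    have hjc : (j : F) = 2 * k - (i + 1) := by
      rw [← hj, Nat.cast_sub (by omega)]
      push_cast
      ring
    rw [hj'] at ih
    rw [hj]
    have e : vseq F k (j + 1) * vseq F k j = vseq F k (i + 1 + 1) * vseq F k (i + 1) := by
      apply mul_right_cancel₀ (mul_ne_zero n1 n2)
      rw [a]
      rw [hjc] at b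
      push_cast at b ⊢
      linear_combination b
    apply mul_right_cancel₀ v1
    rw [← e, ← ih]
    by_cases hE : Even i
    · have : ¬ Even (i + 1) := by grind
      simp only [hE, this, if_true, if_false]
      field_simp
    · have : Even (i + 1) := by grind
      simp only [hE, this, if_true, if_false]
      field_simp

/-- Both expansions, over any field in which the integers up to `2k` are invertible. -/
lemma expansion (H : SmallNZ F k) (hk : 1 ≤ k) (μ : F) (hμ : μ ≠ 0)
    (h1 : μ * vseq F k (2 * k) = vseq F k 1) :
    algebraMap F[X] (RatFunc F) (Pk k) / algebraMap F[X] (RatFunc F) (Qk k)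
      = fcf ((List.range (2 * k)).map
          (fun i => RatFunc.C (vseq F k (i + 1)) * RatFunc.X)) ∧
    algebraMap F[X] (RatFunc F) (Pk k) / algebraMap F[X] (RatFunc F) (Qk k)
      = RatFunc.C μ * fcf (((List.range (2 * k)).map
            (fun i => RatFunc.C (vseq F k (i + 1)) * RatFunc.X)).reverse) := by
  obtain ⟨n, hn⟩ : ∃ n, 2 * k = n + 1 := ⟨2 * k - 1, by omega⟩
  let R : ℕ → RatFunc F := fun i => algebraMap F[X] (RatFunc F) (Rseq F k i)
  have hR0 : ∀ i, i ≤ n → R (i + 1) ≠ 0 := fun i hi =>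
    RatFunc.algebraMap_ne_zero (Rseq_ne_zero H hk (i + 1) (by omega))
  have hRl : R (n + 2) = 0 := by
    have := Rseq_last (F := F) H hk
    rw [hn] at this
    simp [R, this]
  have hRr : ∀ i, R i = RatFunc.C (vseq F k (i + 1)) * RatFunc.X * R (i + 1) + R (i + 2) := by
    intro i
    simp only [R]
    rw [Rseq, map_sub, map_mul, map_mul, RatFunc.algebraMap_C, RatFunc.algebraMap_X]
    ring
  have hμ' : RatFunc.C μ ≠ 0 := by simpa using hμ
  constructor
  · rw [hn, fcf_eq_div n _ R hR0 (fun i _ => hRr i) hRl]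
    simp [R, Rseq]
  · have hrev : ((List.range (2 * k)).map
        (fun i => RatFunc.C (vseq F k (i + 1)) * RatFunc.X)).reverse =
        (List.range (n + 1)).map (fun i => RatFunc.C (vseq F k (2 * k - i)) * RatFunc.X) := by
      rw [← hn]
      apply List.ext_getElem
      · simp
      · intro i h1 h2
        simp at h1 h2 ⊢
        exact Or.inl (by rw [show 2 * k - 1 - i + 1 = 2 * k - i by omega])
    -- rescaling the even remainders by `μ⁻¹` turns the quotients `v_{i+1} T` into `v_{2k-i} T`
    rw [hrev, fcf_eq_div n _ (fun i => (if Even i then (RatFunc.C μ)⁻¹ else 1) * R i)]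
    · simp [R, Rseq]
      field_simp
    · intro i hi
      refine mul_ne_zero ?_ (hR0 i hi)
      split_ifs
      · exact inv_ne_zero hμ'
      · exact one_ne_zero
    · intro i hi
      rw [hRr i, ← vseq_reflect H μ hμ h1 i (by omega)]
      by_cases hE : Even i
      · have e1 : ¬ Even (i + 1) := by grind
        have e2 : Even (i + 2) := by grind
        simp only [hE, e1, e2, if_true, if_false, map_mul]
        field_simp
      · have e1 : Even (i + 1) := by grind
        have e2 : ¬ Even (i + 2) := by grind
        simp only [hE, e1, e2, if_true, if_false, map_mul, map_inv₀]
        field_simp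
    · simp [hRl]

end

/-- For an odd prime `p` and `1 ≤ k < p/2`, in `F_p(T)` one has
`P_k/Q_k = [v_{1,k}T, …, v_{2k,k}T]` and also
`P_k/Q_k = −4k²θ_k² [v_{2k,k}T, …, v_{1,k}T]`. -/
theorem stmt10 (p : ℕ) [Fact p.Prime] (hodd : Odd p) (k : ℕ) (hk : 1 ≤ k)
    (hk2 : 2 * k < p) :
    algebraMap (Polynomial (ZMod p)) (RatFunc (ZMod p)) (Pk k)
        / algebraMap (Polynomial (ZMod p)) (RatFunc (ZMod p)) (Qk k)
      = fcf ((List.range (2 * k)).map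
          (fun i => RatFunc.C (vseq (ZMod p) k (i + 1)) * RatFunc.X)) ∧
    algebraMap (Polynomial (ZMod p)) (RatFunc (ZMod p)) (Pk k)
        / algebraMap (Polynomial (ZMod p)) (RatFunc (ZMod p)) (Qk k)
      = RatFunc.C (-4 * (k : ZMod p) ^ 2 * theta (ZMod p) k ^ 2) *
          fcf (((List.range (2 * k)).map
            (fun i => RatFunc.C (vseq (ZMod p) k (i + 1)) * RatFunc.X)).reverse) := by
  have H := smallNZ_zmod p k hk2
  have h1 := vseq_last H hk
  refine expansion H hk _ ?_ h1
  intro h0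
  rw [h0, zero_mul] at h1
  exact vseq_ne_zero H 1 le_rfl (by omega) h1.symm
end
end
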